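/- Let Var_n^sep denote variance with respect to the uniform probability measure on SEP(n). Then lim_{n→∞} Var_n^sep(A_n^{+,+})/n = (16 − 11√2)/2, and the same limit holds for Var_n^sep(A_n^{−,−}). -/

import Mathlib

open Finset Filter Real
open scoped Classical

/-- `σ` contains the pattern `τ` (a permutation of `Fin k` given as a function). -/
def ContainsPattern {n k : ℕ} (σ : Equiv.Perm (Fin n)) (τ : Fin k → Fin k) : Prop :=
  ∃ f : Fin k → Fin n, StrictMono f ∧ ∀ a b : Fin k, τ a < τ b ↔ σ (f a) < σ (f b)

/-- A permutation is separable iff it avoids the patterns 2413 and 3142. -/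
def Separable {n : ℕ} (σ : Equiv.Perm (Fin n)) : Prop :=
  ¬ ContainsPattern σ (![1, 3, 0, 2] : Fin 4 → Fin 4) ∧
  ¬ ContainsPattern σ (![2, 0, 3, 1] : Fin 4 → Fin 4)

/-- The set of separable permutations of `[n]`. -/
noncomputable def SEP (n : ℕ) : Finset (Equiv.Perm (Fin n)) :=
  Finset.univ.filter fun σ => Separable σ

/-- `IsAltSeq σ s l` : `l` is a strictly increasing list of indices along which the values of `σ`
alternate, starting with an ascent if `s = true` and starting with a descent if `s = false`. -/
def IsAltSeq {n : ℕ} (σ : Equiv.Perm (Fin n)) (s : Bool) (l : List (Fin n)) : Prop :=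
  l.Chain' (· < ·) ∧
  ∀ j : ℕ, ∀ hj : j + 1 < l.length,
    if decide (j % 2 = 0) = s then
      σ (l.get ⟨j, Nat.lt_of_succ_lt hj⟩) < σ (l.get ⟨j + 1, hj⟩)
    else
      σ (l.get ⟨j + 1, hj⟩) < σ (l.get ⟨j, Nat.lt_of_succ_lt hj⟩)

/-- The length of the longest alternating subsequence of `σ` of type `(s, e)`, where
`true` stands for ascent and `false` for descent.  An alternating subsequence starting with
an ascent ends with a descent iff its length is odd (and similarly in the other cases), so the
type is encoded by the parity constraint; a singleton counts as a subsequence of types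
`(+,-)` and `(-,+)` but not of types `(+,+)` and `(-,-)`. -/
noncomputable def altTypeLen {n : ℕ} (σ : Equiv.Perm (Fin n)) (s e : Bool) : ℕ :=
  sSup {k | ∃ l : List (Fin n), IsAltSeq σ s l ∧ l.length = k ∧
    k % 2 = (if s = e then 0 else 1)}

/-- The length `Aₙ(σ)` of the longest alternating subsequence of `σ`. -/
noncomputable def altLen {n : ℕ} (σ : Equiv.Perm (Fin n)) : ℕ :=
  sSup {k | ∃ l : List (Fin n), (IsAltSeq σ true l ∨ IsAltSeq σ false l) ∧
    l.length = k ∧ 1 ≤ k}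

/-- Expectation with respect to the uniform probability measure on `SEP n`. -/
noncomputable def sepExp (n : ℕ) (f : Equiv.Perm (Fin n) → ℝ) : ℝ :=
  (∑ σ ∈ SEP n, f σ) / (SEP n).card

/-- Variance with respect to the uniform probability measure on `SEP n`. -/
noncomputable def sepVar (n : ℕ) (f : Equiv.Perm (Fin n) → ℝ) : ℝ :=
  sepExp n (fun σ => (f σ - sepExp n f) ^ 2)

/-- `B₁^{+,n}(σ)`: the length of the first indecomposable block (0-indexed positions). -/
noncomputable def Bplus {n : ℕ} (σ : Equiv.Perm (Fin n)) : ℕ :=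
  sInf {j | 1 ≤ j ∧ ∀ i : Fin n, (i : ℕ) < j → (σ i : ℕ) < j}

/-- `B₁^{-,n}(σ)`: the length of the first skew indecomposable block (0-indexed positions). -/
noncomputable def Bminus {n : ℕ} (σ : Equiv.Perm (Fin n)) : ℕ :=
  sInf {j | 1 ≤ j ∧ ∀ i : Fin n, (i : ℕ) < j → n - j ≤ (σ i : ℕ)}

/-- Expectation over indecomposable separable permutations of `[n]`, i.e. the conditional
expectation under the uniform measure on `SEP n` given `{B₁^{+,n} = n}`. -/
noncomputable def indecExp (n : ℕ) (f : Equiv.Perm (Fin n) → ℝ) : ℝ :=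
  (∑ σ ∈ (SEP n).filter (fun σ => Bplus σ = n), f σ) /
    ((SEP n).filter (fun σ => Bplus σ = n)).card

/-! ### Words of ascents and descents, and alternating sublists -/

/-- The word of ascents (`true`) and descents (`false`) of a list. -/
def ascWord {α : Type*} [LinearOrder α] : List α → List Bool
  | a :: b :: l => decide (a < b) :: ascWord (b :: l)
  | _ => []

/-- The number of letter changes in the word `a :: w`. -/
def changes (a : Bool) : List Bool → ℕ
  | [] => 0
  | b :: w => (if a = b then 0 else 1) + changes b w

/-- A list whose steps alternate between ascents and descents, starting with an ascent
iff `s = true`. -/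
def IsAltList {α : Type*} [LinearOrder α] (s : Bool) : List α → Prop
  | a :: b :: l => (if s then a < b else b < a) ∧ IsAltList (!s) (b :: l)
  | _ => True

theorem changes_append_cons (a c : Bool) (w w' : List Bool) :
    changes a (w ++ c :: w') = changes a (w ++ [c]) + changes c w' := by
  induction w generalizing a with
  | nil => simp [changes]
  | cons b w ih => simp [changes, ih, add_assoc]

theorem changes_not_map (a : Bool) (w : List Bool) :
    changes (!a) (w.map not) = changes a w := by
  induction w generalizing a with
  | nil => rfl
  | cons b w ih => simp [changes, ih]

theorem changes_le_changes_add_one (a b : Bool) (w : List Bool) :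
    changes a w ≤ changes b w + 1 := by
  cases w with
  | nil => simp [changes]
  | cons c w => simp only [changes]; split_ifs <;> omega

theorem changes_le_append (a c : Bool) (w : List Bool) :
    changes a w ≤ changes a (w ++ [c]) ∧ changes a (w ++ [c]) ≤ changes a w + 1 := by
  induction w generalizing a with
  | nil => simp only [changes, List.nil_append]; split_ifs <;> omega
  | cons b w ih => have := ih b; simp only [changes, List.cons_append]; omega

theorem changes_le_cons (a b : Bool) (w : List Bool) : changes a w ≤ changes a (b :: w) := by
  simp only [changes]
  split_ifs with h
  · simp [h]
  · have := changes_le_changes_add_one a b w; omega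

section
variable {α β : Type*} [LinearOrder α] [LinearOrder β]

theorem ascWord_append (l₁ l₂ : List α) (h₁ : l₁ ≠ []) (h₂ : l₂ ≠ [])
    (h : ∀ a ∈ l₁, ∀ b ∈ l₂, a < b) :
    ascWord (l₁ ++ l₂) = ascWord l₁ ++ true :: ascWord l₂ := by
  induction l₁ with
  | nil => exact absurd rfl h₁
  | cons a l₁ ih =>
    cases l₁ with
    | nil =>
      cases l₂ with
      | nil => exact absurd rfl h₂
      | cons b l₂ => simp [ascWord, h a (by simp) b (by simp)]
    | cons b l₁ =>
      have := ih (by simp) (fun x hx => h x (by simp [hx]))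
      simp only [List.cons_append] at this
      simp [ascWord, this]

theorem ascWord_map_strictMono {f : α → β} (hf : StrictMono f) (l : List α) :
    ascWord (l.map f) = ascWord l := by
  induction l with
  | nil => rfl
  | cons a l ih =>
    cases l with
    | nil => rfl
    | cons b l =>
      simp only [List.map_cons] at ih
      simp [ascWord, ih, hf.lt_iff_lt]

theorem ascWord_map_strictAnti {f : α → β} (hf : StrictAnti f) (l : List α) (hl : l.Nodup) :
    ascWord (l.map f) = (ascWord l).map not := by
  induction l with
  | nil => rfl
  | cons a l ih =>
    cases l with
    | nil => rfl
    | cons b l =>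
      have ih := ih hl.of_cons
      simp only [List.map_cons] at ih
      have hab : a ≠ b := by rintro rfl; simp at hl
      simp only [List.map_cons, ascWord, ih, hf.lt_iff_gt, List.cons.injEq, and_true]
      rcases lt_or_gt_of_ne hab with h | h <;> simp [h, h.not_gt]

theorem IsAltList.take {s : Bool} {l : List α} (h : IsAltList s l) (k : ℕ) :
    IsAltList s (l.take k) := by
  induction l generalizing s k with
  | nil => simpa using h
  | cons a l ih =>
    cases k with
    | zero => simp [IsAltList]
    | succ k =>
      cases l with
      | nil => simp [IsAltList]
      | cons b l =>
        have := ih h.2 k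
        cases k with
        | zero => simp [IsAltList]
        | succ k => exact ⟨h.1, this⟩

theorem IsAltList.length_le {s : Bool} {a : α} {l L : List α} (hL : (a :: L).Nodup)
    (hl : IsAltList s l) (hs : l.Sublist (a :: L)) :
    l.length ≤ 1 + changes (!s) (ascWord (a :: L)) := by
  induction L generalizing s a l with
  | nil => simpa [ascWord, changes] using hs.length_le
  | cons b L ih =>
    have hLb := hL.of_cons
    have hab : a ≠ b := by rintro rfl; simp at hL
    rcases List.sublist_cons_iff.1 hs with h | ⟨r, rfl, hr⟩
    · refine (ih hLb hl h).trans ?_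
      have := changes_le_cons (!s) (decide (a < b)) (ascWord (b :: L))
      simp only [ascWord]
      omega
    · by_cases hc : decide (a < b) = s
      · have hr' : IsAltList (!s) r := by
          cases r with
          | nil => trivial
          | cons c r => exact hl.2
        have := ih hLb hr' hr
        simp only [ascWord, hc, changes, List.length_cons, Bool.not_not] at this ⊢
        simp
        omega
      · have hc' : decide (a < b) = !s := by cases s <;> simp_all
        suffices h : (a :: r).length ≤ 1 + changes (!s) (ascWord (b :: L)) by
          simpa [ascWord, hc', changes] using h
        cases r with
        | nil => simp
        | cons c r =>
          have hlt : if s then b < c else c < b := by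
            have h1 := hl.1
            cases s with
            | true =>
              simp only [if_true] at h1 ⊢
              have : ¬ a < b := by simpa using hc
              exact lt_of_le_of_lt (not_lt.1 this) h1
            | false =>
              simp only [Bool.false_eq_true, if_false] at h1 ⊢
              exact h1.trans (by simpa using hc)
          have hcb : c ≠ b := by
            rintro rfl; cases s <;> simp at hlt
          have hr' : (c :: r).Sublist L := by
            rcases List.sublist_cons_iff.1 hr with h | ⟨r', h, -⟩
            · exact h
            · exact absurd (List.cons.inj h).1 hcb
          have : IsAltList s (b :: c :: r) := ⟨hlt, hl.2⟩
          simpa using ih hLb this (hr'.cons_cons b)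

theorem exists_isAltList {s : Bool} {a : α} {L : List α} (hL : (a :: L).Nodup) :
    ∃ (x : α) (l : List α), IsAltList s (x :: l) ∧ (x :: l).Sublist (a :: L) ∧
      (if s then x ≤ a else a ≤ x) ∧
      (x :: l).length = 1 + changes (!s) (ascWord (a :: L)) := by
  induction L generalizing s a with
  | nil => exact ⟨a, [], by simp [IsAltList, ascWord, changes]⟩
  | cons b L ih =>
    have hLb := hL.of_cons
    have hab : a ≠ b := by rintro rfl; simp at hL
    by_cases hc : decide (a < b) = s
    · obtain ⟨x, l, hl, hsub, hx, hlen⟩ := ih (s := !s) hLb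
      refine ⟨a, x :: l, ⟨?_, hl⟩, hsub.cons_cons a, by simp, ?_⟩
      · cases s with
        | true => simp at hc hx ⊢; exact hc.trans_le hx
        | false => simp at hc hx ⊢; exact hx.trans_lt (lt_of_le_of_ne hc hab.symm)
      · simp only [ascWord, hc, changes, List.length_cons, Bool.not_not] at hlen ⊢
        simp
        omega
    · have hc' : decide (a < b) = !s := by cases s <;> simp_all
      obtain ⟨x, l, hl, hsub, hx, hlen⟩ := ih (s := s) hLb
      refine ⟨x, l, hl, hsub.cons a, ?_, ?_⟩
      · cases s with
        | true => simp at hc hx ⊢; exact hx.trans hc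
        | false => simp at hc hx ⊢; exact hc.le.trans hx
      · rw [hlen]; simp [ascWord, hc', changes]

end

/-- The word of ascents and descents of a permutation. -/
def permWord {n : ℕ} (σ : Equiv.Perm (Fin n)) : List Bool :=
  ascWord (List.ofFn σ)

theorem isAltSeq_iff {n : ℕ} (σ : Equiv.Perm (Fin n)) (s : Bool) (l : List (Fin n)) :
    IsAltSeq σ s l ↔ l.Sublist (List.finRange n) ∧ IsAltList s (l.map σ) := by
  refine and_congr ?_ ?_
  · change List.IsChain _ l ↔ _
    rw [List.isChain_iff_pairwise]
    constructor
    · intro h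
      refine List.sublist_of_subperm_of_pairwise (r := (· ≤ ·)) ?_ (h.imp le_of_lt)
        ((List.pairwise_lt_finRange n).imp le_of_lt)
      exact List.subperm_of_subset (h.imp ne_of_lt) (fun x _ => List.mem_finRange x)
    · exact fun h => (List.pairwise_lt_finRange n).sublist h
  · induction l generalizing s with
    | nil => simp [IsAltList]
    | cons a l ih =>
      cases l with
      | nil => simp [IsAltList]
      | cons b l =>
        rw [List.map_cons, List.map_cons, IsAltList, ← List.map_cons, ← ih]
        constructor
        · intro h
          refine ⟨?_, fun j hj => ?_⟩
          · have := h 0 (by simp)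
            cases s <;> simpa using this
          · have := h (j + 1) (by simpa using hj)
            convert this using 1
            · cases s <;> simp <;> omega
            · exact Iff.rfl
            · exact Iff.rfl
        · rintro ⟨h0, h⟩ j hj
          cases j with
          | zero => cases s <;> simpa using h0
          | succ j =>
            have := h j (by simpa using hj)
            convert this using 1
            · cases s <;> simp <;> omega
            · exact Iff.rfl
            · exact Iff.rfl

theorem altTypeLen_bounds {n : ℕ} (hn : 1 ≤ n) (σ : Equiv.Perm (Fin n)) (s : Bool) :
    changes (!s) (permWord σ) ≤ altTypeLen σ s s ∧
      altTypeLen σ s s ≤ 1 + changes (!s) (permWord σ) := by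
  obtain ⟨a, L, hL⟩ : ∃ a L, List.ofFn σ = a :: L :=
    List.exists_cons_of_ne_nil (by simp; omega)
  have hnd : (a :: L).Nodup := hL ▸ List.nodup_ofFn.2 σ.injective
  have hub : ∀ k ∈ {k | ∃ l : List (Fin n), IsAltSeq σ s l ∧ l.length = k ∧
      k % 2 = (if s = s then 0 else 1)}, k ≤ 1 + changes (!s) (permWord σ) := by
    rintro k ⟨l, hl, rfl, -⟩
    rw [isAltSeq_iff] at hl
    have hsub := hl.1.map σ
    rw [← List.ofFn_eq_map, hL] at hsub
    simpa [permWord, hL] using hl.2.length_le hnd hsub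
  refine ⟨?_, csSup_le' hub⟩
  obtain ⟨x, l, hl, hsub, -, hlen⟩ := exists_isAltList (s := s) hnd
  have hlen' : (x :: l).length = 1 + changes (!s) (permWord σ) := by rw [hlen, permWord, hL]
  generalize x :: l = l₀ at *
  set c := changes (!s) (permWord σ)
  obtain ⟨k, hk, hck, hk2⟩ : ∃ k, k ≤ 1 + c ∧ c ≤ k ∧ k % 2 = 0 := by
    rcases Nat.mod_two_eq_zero_or_one c with h | h
    · exact ⟨c, by omega, le_rfl, h⟩
    · exact ⟨1 + c, le_rfl, by omega, by omega⟩
  refine hck.trans (le_csSup ⟨_, hub⟩ ?_)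
  have hsub' := (List.take_sublist k l₀).trans hsub
  rw [← hL, List.ofFn_eq_map, List.sublist_map_iff] at hsub'
  obtain ⟨m, hm, hm'⟩ := hsub'
  refine ⟨m, (isAltSeq_iff _ _ _).2 ⟨hm, hm' ▸ hl.take k⟩, ?_, by simpa using hk2⟩
  have := congrArg List.length hm'
  simp at this
  omega

/-! ### Separable permutations and direct sums -/

theorem separable_iff {n : ℕ} (σ : Equiv.Perm (Fin n)) : Separable σ ↔
    (¬ ∃ a b c d, a < b ∧ b < c ∧ c < d ∧ σ c < σ a ∧ σ a < σ d ∧ σ d < σ b) ∧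
    (¬ ∃ a b c d, a < b ∧ b < c ∧ c < d ∧ σ b < σ d ∧ σ d < σ a ∧ σ a < σ c) := by
  have hmono : ∀ {a b c d : Fin n}, a < b → b < c → c < d → StrictMono ![a, b, c, d] := by
    intro a b c d hab hbc hcd
    rw [Fin.strictMono_iff_lt_succ]
    intro i
    fin_cases i <;> simpa
  refine and_congr (not_congr ⟨?_, ?_⟩) (not_congr ⟨?_, ?_⟩)
  · rintro ⟨f, hf, h⟩
    exact ⟨f 0, f 1, f 2, f 3, hf (by decide), hf (by decide), hf (by decide),
      (h 2 0).1 (by decide), (h 0 3).1 (by decide), (h 3 1).1 (by decide)⟩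
  · rintro ⟨a, b, c, d, hab, hbc, hcd, h1, h2, h3⟩
    refine ⟨![a, b, c, d], hmono hab hbc hcd, fun i j => ?_⟩
    rw [Fin.lt_def] at *
    fin_cases i <;> fin_cases j <;> simp <;> omega
  · rintro ⟨f, hf, h⟩
    exact ⟨f 0, f 1, f 2, f 3, hf (by decide), hf (by decide), hf (by decide),
      (h 1 3).1 (by decide), (h 3 0).1 (by decide), (h 0 2).1 (by decide)⟩
  · rintro ⟨a, b, c, d, hab, hbc, hcd, h1, h2, h3⟩
    refine ⟨![a, b, c, d], hmono hab hbc hcd, fun i j => ?_⟩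
    rw [Fin.lt_def] at *
    fin_cases i <;> fin_cases j <;> simp <;> omega

/-- The first `k` entries of `σ` lie below all the others. -/
def IsCut {n : ℕ} (σ : Equiv.Perm (Fin n)) (k : ℕ) : Prop :=
  ∀ i j : Fin n, (i : ℕ) < k → k ≤ (j : ℕ) → σ i < σ j

/-- `σ` is a direct sum of two nonempty permutations. -/
def SumDecomposable {n : ℕ} (σ : Equiv.Perm (Fin n)) : Prop :=
  ∃ k, 0 < k ∧ k < n ∧ IsCut σ k

/-- If an injective sequence avoids 3142 and its first `n` terms split as a direct sum, then its
first `n + 1` terms split as a direct sum or as a skew sum. -/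
theorem exists_cut_succ (g : ℕ → ℤ) (n : ℕ) (hinj : ∀ i j, i < j → j ≤ n → g i ≠ g j)
    (hav : ¬ ∃ a b c d, a < b ∧ b < c ∧ c < d ∧ d ≤ n ∧ g b < g d ∧ g d < g a ∧ g a < g c)
    (hcut : ∃ k, 0 < k ∧ k < n ∧ ∀ i j, i < k → k ≤ j → j < n → g i < g j) :
    (∃ k, 0 < k ∧ k < n + 1 ∧ ∀ i j, i < k → k ≤ j → j < n + 1 → g i < g j) ∨
    (∃ k, 0 < k ∧ k < n + 1 ∧ ∀ i j, i < k → k ≤ j → j < n + 1 → g j < g i) := by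
  obtain ⟨hk0, hkn, hk⟩ := Nat.find_spec hcut
  have hmin := fun m => Nat.find_min hcut (m := m)
  generalize Nat.find hcut = k at *
  by_cases h1 : ∀ i < k, g i < g n
  · refine Or.inl ⟨k, hk0, by omega, fun i j hi hj hjn => ?_⟩
    rcases Nat.lt_or_eq_of_le (Nat.le_of_lt_succ hjn) with h | rfl
    · exact hk i j hi hj h
    · exact h1 i hi
  push Not at h1
  obtain ⟨i₀, hi₀, hgi₀⟩ := h1
  by_cases h2 : ∀ i < n, g n < g i
  · refine Or.inr ⟨n, by omega, by omega, fun i j hi hj hjn => ?_⟩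
    obtain rfl : j = n := by omega
    exact h2 i hi
  push Not at h2
  obtain ⟨j₀, hj₀, hgj₀⟩ := h2
  have hj₀k : j₀ < k := by
    by_contra h
    have := hk i₀ j₀ hi₀ (by omega) hj₀
    omega
  exfalso
  by_cases h3 : ∃ a b, a < b ∧ b < k ∧ g b < g n ∧ g n < g a
  · obtain ⟨a, b, hab, hb, hbn, hna⟩ := h3
    exact hav ⟨a, b, k, n, hab, hb, hkn, le_rfl, hbn, hna, hk a k (by omega) le_rfl hkn⟩
  push Not at h3
  have hex : ∃ m, m < k ∧ g n < g m :=
    ⟨i₀, hi₀, lt_of_le_of_ne hgi₀ (hinj i₀ n (by omega) le_rfl).symm⟩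
  obtain ⟨hmk, hm⟩ := Nat.find_spec hex
  have hmin' := fun m => Nat.find_min hex (m := m)
  generalize Nat.find hex = m at *
  have hlow : ∀ i < m, g i < g n := by
    intro i hi
    have := hmin' i hi
    have := hinj i n (by omega) le_rfl
    by_contra hc
    exact hmin' i hi ⟨by omega, by omega⟩
  have hm0 : 0 < m := by
    rcases Nat.eq_zero_or_pos m with rfl | h
    · rcases Nat.eq_zero_or_pos j₀ with rfl | h'
      · omega
      · have := h3 0 j₀ h' hj₀k (lt_of_le_of_ne hgj₀ (hinj j₀ n hj₀ le_rfl))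
        omega
    · exact h
  refine hmin m hmk ⟨hm0, by omega, fun i j hi hj hjn => ?_⟩
  by_cases hjk : j < k
  · have hnj : g n ≤ g j := by
      rcases Nat.lt_or_eq_of_le hj with h | rfl
      · by_contra hc
        have := h3 m j h hjk (by omega)
        omega
      · exact hm.le
    exact (hlow i hi).trans_le hnj
  · exact hk i j (by omega) (by omega) hjn

theorem exists_cut_of_avoids (g : ℕ → ℤ) (n : ℕ) (hn : 2 ≤ n)
    (hinj : ∀ i j, i < j → j < n → g i ≠ g j)
    (hav₁ : ¬ ∃ a b c d, a < b ∧ b < c ∧ c < d ∧ d < n ∧ g c < g a ∧ g a < g d ∧ g d < g b)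
    (hav₂ : ¬ ∃ a b c d, a < b ∧ b < c ∧ c < d ∧ d < n ∧ g b < g d ∧ g d < g a ∧ g a < g c) :
    (∃ k, 0 < k ∧ k < n ∧ ∀ i j, i < k → k ≤ j → j < n → g i < g j) ∨
    (∃ k, 0 < k ∧ k < n ∧ ∀ i j, i < k → k ≤ j → j < n → g j < g i) := by
  induction n, hn using Nat.le_induction with
  | base =>
    rcases lt_or_gt_of_ne (hinj 0 1 (by omega) (by omega)) with h | h
    · refine Or.inl ⟨1, by omega, by omega, fun i j hi hj hj2 => ?_⟩
      obtain rfl : i = 0 := by omega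
      obtain rfl : j = 1 := by omega
      exact h
    · refine Or.inr ⟨1, by omega, by omega, fun i j hi hj hj2 => ?_⟩
      obtain rfl : i = 0 := by omega
      obtain rfl : j = 1 := by omega
      exact h
  | succ n hn ih =>
    have ih := ih (fun i j hij hj => hinj i j hij (by omega))
      (fun ⟨a, b, c, d, h1, h2, h3, h4, h5⟩ => hav₁ ⟨a, b, c, d, h1, h2, h3, by omega, h5⟩)
      (fun ⟨a, b, c, d, h1, h2, h3, h4, h5⟩ => hav₂ ⟨a, b, c, d, h1, h2, h3, by omega, h5⟩)
    rcases ih with h | h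
    · exact exists_cut_succ g n (fun i j hij hj => hinj i j hij (by omega))
        (fun ⟨a, b, c, d, h1, h2, h3, h4, h5⟩ => hav₂ ⟨a, b, c, d, h1, h2, h3, by omega, h5⟩) h
    · have := exists_cut_succ (fun i => - g i) n
        (fun i j hij hj => by simpa using hinj i j hij (by omega))
        (fun ⟨a, b, c, d, h1, h2, h3, h4, h5, h6, h7⟩ =>
          hav₁ ⟨a, b, c, d, h1, h2, h3, by omega, by omega, by omega, by omega⟩)
        (by simpa using h)
      simpa using this.symm

/-- The complement of a permutation. -/
def complPerm {n : ℕ} (σ : Equiv.Perm (Fin n)) : Equiv.Perm (Fin n) := σ.trans Fin.revPerm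

theorem complPerm_apply {n : ℕ} (σ : Equiv.Perm (Fin n)) (i : Fin n) :
    complPerm σ i = (σ i).rev := rfl

theorem complPerm_complPerm {n : ℕ} (σ : Equiv.Perm (Fin n)) :
    complPerm (complPerm σ) = σ := by
  ext i; simp [complPerm_apply]

theorem separable_complPerm {n : ℕ} {σ : Equiv.Perm (Fin n)} (h : Separable σ) :
    Separable (complPerm σ) := by
  rw [separable_iff] at *
  simp only [complPerm_apply, Fin.rev_lt_rev]
  refine ⟨fun ⟨a, b, c, d, h1, h2, h3, h4, h5, h6⟩ => h.2 ⟨a, b, c, d, h1, h2, h3, h6, h5, h4⟩,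
    fun ⟨a, b, c, d, h1, h2, h3, h4, h5, h6⟩ => h.1 ⟨a, b, c, d, h1, h2, h3, h6, h5, h4⟩⟩

theorem sumDecomposable_complPerm_iff {n : ℕ} (hn : 2 ≤ n) {σ : Equiv.Perm (Fin n)}
    (h : Separable σ) : SumDecomposable (complPerm σ) ↔ ¬ SumDecomposable σ := by
  constructor
  · rintro ⟨k, hk0, hkn, hk⟩ ⟨l, hl0, hln, hl⟩
    have h1 := hk ⟨0, by omega⟩ ⟨n - 1, by omega⟩ hk0 (by simp; omega)
    have h2 := hl ⟨0, by omega⟩ ⟨n - 1, by omega⟩ hl0 (by simp; omega)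
    rw [complPerm_apply, complPerm_apply, Fin.rev_lt_rev] at h1
    exact absurd h1 h2.not_gt
  · intro hnd
    rw [separable_iff] at h
    let g : ℕ → ℤ := fun i => if hi : i < n then ((σ ⟨i, hi⟩ : ℕ) : ℤ) else 0
    have hg : ∀ i (hi : i < n), g i = ((σ ⟨i, hi⟩ : ℕ) : ℤ) := fun i hi => by simp [g, hi]
    have hg' : ∀ i j (hi : i < n) (hj : j < n), g i < g j ↔ σ ⟨i, hi⟩ < σ ⟨j, hj⟩ := by
      intro i j hi hj
      rw [hg i hi, hg j hj, Fin.lt_def]; norm_cast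
    have hinj : ∀ i j, i < j → j < n → g i ≠ g j := by
      intro i j hij hj
      rw [hg i (by omega), hg j hj]
      intro hc
      have := σ.injective (Fin.ext (by exact_mod_cast hc) : σ ⟨i, by omega⟩ = σ ⟨j, hj⟩)
      exact hij.ne (congrArg Fin.val this)
    rcases exists_cut_of_avoids g n hn hinj
      (fun ⟨a, b, c, d, h1, h2, h3, h4, h5, h6, h7⟩ =>
        h.1 ⟨⟨a, by omega⟩, ⟨b, by omega⟩, ⟨c, by omega⟩, ⟨d, h4⟩, h1, h2, h3,
          (hg' _ _ _ _).1 h5, (hg' _ _ _ _).1 h6, (hg' _ _ _ _).1 h7⟩)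
      (fun ⟨a, b, c, d, h1, h2, h3, h4, h5, h6, h7⟩ =>
        h.2 ⟨⟨a, by omega⟩, ⟨b, by omega⟩, ⟨c, by omega⟩, ⟨d, h4⟩, h1, h2, h3,
          (hg' _ _ _ _).1 h5, (hg' _ _ _ _).1 h6, (hg' _ _ _ _).1 h7⟩)
      with ⟨k, hk0, hkn, hk⟩ | ⟨k, hk0, hkn, hk⟩
    · exact absurd ⟨k, hk0, hkn, fun i j hi hj => (hg' i j i.2 j.2).1 (hk i j hi hj j.2)⟩ hnd
    · refine ⟨k, hk0, hkn, fun i j hi hj => ?_⟩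
      rw [complPerm_apply, complPerm_apply, Fin.rev_lt_rev]
      exact (hg' j i j.2 i.2).1 (hk i j hi hj j.2)

theorem permWord_complPerm {n : ℕ} (σ : Equiv.Perm (Fin n)) :
    permWord (complPerm σ) = (permWord σ).map not := by
  rw [permWord, permWord, ← ascWord_map_strictAnti Fin.rev_strictAnti _
    (List.nodup_ofFn.2 σ.injective), List.map_ofFn]
  rfl

/-- The direct sum of two permutations. -/
def directSum {k l : ℕ} (τ : Equiv.Perm (Fin k)) (ρ : Equiv.Perm (Fin l)) :
    Equiv.Perm (Fin (k + l)) :=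
  finSumFinEquiv.permCongr (Equiv.sumCongr τ ρ)

section
variable {k l : ℕ} (τ : Equiv.Perm (Fin k)) (ρ : Equiv.Perm (Fin l))

@[simp]
theorem directSum_castAdd (i : Fin k) :
    directSum τ ρ (Fin.castAdd l i) = Fin.castAdd l (τ i) := by
  simp [directSum, Equiv.permCongr_apply]

@[simp]
theorem directSum_natAdd (i : Fin l) :
    directSum τ ρ (Fin.natAdd k i) = Fin.natAdd k (ρ i) := by
  simp [directSum, Equiv.permCongr_apply]

theorem isCut_directSum : IsCut (directSum τ ρ) k := by
  intro i j hi hj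
  induction i using Fin.addCases with
  | right i => simp at hi
  | left i =>
    induction j using Fin.addCases with
    | left j => simp at hj; omega
    | right j => simp [Fin.lt_def]; omega

theorem isCut_directSum_iff {m : ℕ} (hm : m < k) : IsCut (directSum τ ρ) m ↔ IsCut τ m := by
  constructor
  · intro h i j hi hj
    simpa [(Fin.strictMono_castAdd l).lt_iff_lt] using h (Fin.castAdd l i) (Fin.castAdd l j)
      (by simpa) (by simpa)
  · intro h i j hi hj
    induction i using Fin.addCases with
    | right i => simp at hi; omega
    | left i =>
      induction j using Fin.addCases with
      | left j =>
        simpa [(Fin.strictMono_castAdd l).lt_iff_lt] using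
          h i j (by simpa using hi) (by simpa using hj)
      | right j => simp [Fin.lt_def]; omega

theorem separable_directSum_iff : Separable (directSum τ ρ) ↔ Separable τ ∧ Separable ρ := by
  simp only [separable_iff]
  constructor
  · rintro ⟨h1, h2⟩
    refine ⟨⟨?_, ?_⟩, ?_, ?_⟩
    · rintro ⟨a, b, c, d, h⟩
      exact h1 ⟨a.castAdd l, b.castAdd l, c.castAdd l, d.castAdd l,
        by simpa [(Fin.strictMono_castAdd l).lt_iff_lt] using h⟩
    · rintro ⟨a, b, c, d, h⟩
      exact h2 ⟨a.castAdd l, b.castAdd l, c.castAdd l, d.castAdd l,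
        by simpa [(Fin.strictMono_castAdd l).lt_iff_lt] using h⟩
    · rintro ⟨a, b, c, d, h⟩
      exact h1 ⟨a.natAdd k, b.natAdd k, c.natAdd k, d.natAdd k, by simpa using h⟩
    · rintro ⟨a, b, c, d, h⟩
      exact h2 ⟨a.natAdd k, b.natAdd k, c.natAdd k, d.natAdd k, by simpa using h⟩
  · rintro ⟨⟨h1, h2⟩, h3, h4⟩
    constructor
    · rintro ⟨a, b, c, d, h⟩
      induction a using Fin.addCases <;> induction b using Fin.addCases <;>
      induction c using Fin.addCases <;> induction d using Fin.addCases
      case left.left.left.left a b c d =>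
        exact h1 ⟨a, b, c, d, by simpa [(Fin.strictMono_castAdd l).lt_iff_lt] using h⟩
      case right.right.right.right a b c d =>
        exact h3 ⟨a, b, c, d, by simpa [(Fin.strictMono_castAdd l).lt_iff_lt] using h⟩
      all_goals
        simp only [directSum_castAdd, directSum_natAdd, Fin.lt_def, Fin.val_castAdd,
          Fin.val_natAdd] at h
        omega
    · rintro ⟨a, b, c, d, h⟩
      induction a using Fin.addCases <;> induction b using Fin.addCases <;>
      induction c using Fin.addCases <;> induction d using Fin.addCases
      case left.left.left.left a b c d =>
        exact h2 ⟨a, b, c, d, by simpa [(Fin.strictMono_castAdd l).lt_iff_lt] using h⟩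
      case right.right.right.right a b c d =>
        exact h4 ⟨a, b, c, d, by simpa [(Fin.strictMono_castAdd l).lt_iff_lt] using h⟩
      all_goals
        simp only [directSum_castAdd, directSum_natAdd, Fin.lt_def, Fin.val_castAdd,
          Fin.val_natAdd] at h
        omega

theorem permWord_directSum (hk : 0 < k) (hl : 0 < l) :
    permWord (directSum τ ρ) = permWord τ ++ true :: permWord ρ := by
  have : List.ofFn (directSum τ ρ) =
      (List.ofFn τ).map (Fin.castAdd l) ++ (List.ofFn ρ).map (Fin.natAdd k) := by
    rw [List.ofFn_add, List.map_ofFn, List.map_ofFn]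
    congr 1
    · congr 1; ext i; exact congrArg Fin.val (directSum_castAdd τ ρ i)
    · congr 1; ext i; simp
  rw [permWord, this, ascWord_append, ascWord_map_strictMono (Fin.strictMono_castAdd l),
    ascWord_map_strictMono (Fin.strictMono_natAdd k)]
  · rfl
  · simp; omega
  · simp; omega
  · simp only [List.mem_map, List.mem_ofFn]
    rintro _ ⟨_, ⟨i, rfl⟩, rfl⟩ _ ⟨_, ⟨j, rfl⟩, rfl⟩
    simp [Fin.lt_def]; omega

end

theorem directSum_injective {k l : ℕ} {τ τ' : Equiv.Perm (Fin k)} {ρ ρ' : Equiv.Perm (Fin l)}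
    (h : directSum τ ρ = directSum τ' ρ') : τ = τ' ∧ ρ = ρ' := by
  constructor
  · ext i
    simpa using congrArg (fun σ => (σ (Fin.castAdd l i) : ℕ)) h
  · ext i
    simpa using congrArg (fun σ => (σ (Fin.natAdd k i) : ℕ)) h

theorem exists_directSum {k l : ℕ} {σ : Equiv.Perm (Fin (k + l))} (h : IsCut σ k) :
    ∃ τ ρ, directSum τ ρ = σ := by
  have hlt : ∀ i : Fin (k + l), (i : ℕ) < k → (σ i : ℕ) < k := by
    intro i hi
    have hsub : (Finset.univ.map (Fin.natAddEmb k : Fin l ↪ Fin (k + l))).map σ.toEmbedding ⊆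
        Finset.Ioi (σ i) := by
      intro x hx
      simp only [Finset.mem_map, Finset.mem_univ, true_and] at hx
      obtain ⟨_, ⟨j, rfl⟩, rfl⟩ := hx
      rw [Finset.mem_Ioi]
      exact h i _ hi (by simp)
    have := Finset.card_le_card hsub
    simp at this
    omega
  have hmaps : Set.MapsTo (finSumFinEquiv.symm.permCongr σ)
      (Set.range (Sum.inl : Fin k → Fin k ⊕ Fin l)) (Set.range Sum.inl) := by
    rintro _ ⟨i, rfl⟩
    have hi := hlt (Fin.castAdd l i) (by simp)
    refine ⟨⟨_, hi⟩, ?_⟩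
    rw [Equiv.permCongr_apply, Equiv.eq_symm_apply]
    ext
    simp
  obtain ⟨⟨τ, ρ⟩, hτ⟩ := Equiv.Perm.mem_sumCongrHom_range_of_perm_mapsTo_inl hmaps
  refine ⟨τ, ρ, ?_⟩
  have : Equiv.sumCongr τ ρ = finSumFinEquiv.symm.permCongr σ := hτ
  rw [directSum, this]
  ext i
  simp [Equiv.permCongr_apply]

/-! ### Generating functions -/

/-- The position of the first cut of `σ`. -/
noncomputable def firstCut {n : ℕ} (σ : Equiv.Perm (Fin n)) : ℕ :=
  sInf {k | 0 < k ∧ IsCut σ k}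

theorem firstCut_eq_iff {n k : ℕ} (hk : 0 < k) (σ : Equiv.Perm (Fin n)) :
    firstCut σ = k ↔ IsCut σ k ∧ ∀ m, 0 < m → m < k → ¬ IsCut σ m := by
  constructor
  · rintro rfl
    have hne : {k | 0 < k ∧ IsCut σ k}.Nonempty := Nat.nonempty_of_pos_sInf hk
    exact ⟨(Nat.sInf_mem hne).2, fun m hm hmk h => Nat.notMem_of_lt_sInf hmk ⟨hm, h⟩⟩
  · rintro ⟨h, hmin⟩
    refine le_antisymm (Nat.sInf_le ⟨hk, h⟩) (le_csInf ⟨k, hk, h⟩ ?_)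
    rintro m ⟨hm, hm'⟩
    by_contra hlt
    exact hmin m hm (by omega) hm'

theorem SumDecomposable.firstCut_mem {n : ℕ} {σ : Equiv.Perm (Fin n)} (h : SumDecomposable σ) :
    0 < firstCut σ ∧ firstCut σ < n := by
  obtain ⟨k, hk0, hkn, hk⟩ := h
  exact ⟨(Nat.sInf_mem (s := {k | 0 < k ∧ IsCut σ k}) ⟨k, hk0, hk⟩).1,
    (Nat.sInf_le (s := {k | 0 < k ∧ IsCut σ k}) ⟨hk0, hk⟩).trans_lt hkn⟩

theorem mem_SEP {n : ℕ} {σ : Equiv.Perm (Fin n)} : σ ∈ SEP n ↔ Separable σ := by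
  simp [SEP]

theorem sum_sumDecomposable {M : Type*} [AddCommMonoid M] (n : ℕ) (F : List Bool → M) :
    ∑ σ ∈ SEP n with SumDecomposable σ, F (permWord σ) =
      ∑ p ∈ antidiagonal n, if p.1 = 0 ∨ p.2 = 0 then 0 else
        ∑ τ ∈ SEP p.1 with ¬ SumDecomposable τ, ∑ ρ ∈ SEP p.2,
          F (permWord τ ++ true :: permWord ρ) := by
  rw [← Finset.sum_fiberwise_of_maps_to (t := antidiagonal n)
    (g := fun σ => (firstCut σ, n - firstCut σ))]
  swap
  · intro σ hσ
    have := (Finset.mem_filter.1 hσ).2.firstCut_mem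
    rw [HasAntidiagonal.mem_antidiagonal]
    omega
  refine Finset.sum_congr rfl fun ⟨k, l⟩ hp => ?_
  obtain rfl : k + l = n := by simpa using hp
  split_ifs with h0
  · refine Finset.sum_eq_zero fun σ hσ => ?_
    rw [Finset.mem_filter, Finset.mem_filter, Prod.mk.injEq] at hσ
    have := hσ.1.2.firstCut_mem
    dsimp only at h0
    omega
  · have hk : 0 < k := by simp at h0; omega
    have hl : 0 < l := by simp at h0; omega
    rw [← Finset.sum_product']
    symm
    refine Finset.sum_nbij (fun x => directSum x.1 x.2) ?_ ?_ ?_ ?_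
    · rintro ⟨τ, ρ⟩ h
      simp only [Finset.mem_product, Finset.mem_filter, mem_SEP, Prod.mk.injEq] at h ⊢
      have hc : firstCut (directSum τ ρ) = k := by
        rw [firstCut_eq_iff hk]
        refine ⟨isCut_directSum τ ρ, fun m hm hmk hcut => h.1.2 ⟨m, hm, hmk, ?_⟩⟩
        exact (isCut_directSum_iff τ ρ hmk).1 hcut
      exact ⟨⟨(separable_directSum_iff τ ρ).2 ⟨h.1.1, h.2⟩, k, hk, by omega,
        isCut_directSum τ ρ⟩, hc, by omega⟩
    · rintro ⟨τ, ρ⟩ - ⟨τ', ρ'⟩ - h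
      exact Prod.ext_iff.2 (directSum_injective h)
    · intro σ hσ
      simp only [Finset.coe_filter, Finset.mem_filter, mem_SEP, Prod.mk.injEq,
        Set.mem_ofPred_eq] at hσ
      obtain ⟨⟨hsep, -⟩, hc, -⟩ := hσ
      rw [firstCut_eq_iff hk] at hc
      obtain ⟨τ, ρ, rfl⟩ := exists_directSum hc.1
      rw [separable_directSum_iff] at hsep
      refine ⟨(τ, ρ), ?_, rfl⟩
      simp only [Finset.coe_product, Set.mem_prod, Finset.mem_coe, Finset.mem_filter, mem_SEP]
      refine ⟨⟨hsep.1, ?_⟩, hsep.2⟩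
      rintro ⟨m, hm, hmk, h⟩
      exact hc.2 m hm hmk ((isCut_directSum_iff τ ρ hmk).2 h)
    · rintro ⟨τ, ρ⟩ -
      rw [permWord_directSum τ ρ hk hl]

theorem sum_not_sumDecomposable {M : Type*} [AddCommMonoid M] {n : ℕ} (hn : 2 ≤ n)
    (F : List Bool → M) :
    ∑ σ ∈ SEP n with ¬ SumDecomposable σ, F (permWord σ) =
      ∑ σ ∈ SEP n with SumDecomposable σ, F ((permWord σ).map not) := by
  refine Finset.sum_nbij' complPerm complPerm ?_ ?_ ?_ ?_ ?_
  · intro σ h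
    simp only [Finset.mem_filter, mem_SEP] at h ⊢
    exact ⟨separable_complPerm h.1, (sumDecomposable_complPerm_iff hn h.1).2 h.2⟩
  · intro σ h
    simp only [Finset.mem_filter, mem_SEP] at h ⊢
    refine ⟨separable_complPerm h.1, fun hc => ?_⟩
    exact (sumDecomposable_complPerm_iff hn h.1).1 hc h.2
  · exact fun σ _ => complPerm_complPerm σ
  · exact fun σ _ => complPerm_complPerm σ
  · intro σ _
    rw [permWord_complPerm, List.map_map, Bool.involutive_not.comp_self, List.map_id]

section
variable {R : Type*} [CommRing R] (y : R)

/-- Generating function of sum-decomposable separable permutations, weighted by the number of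
changes in the word of ascents and descents padded by the letters `a` and `b`. -/
noncomputable def decGF (a b : Bool) : PowerSeries R :=
  PowerSeries.mk fun n => ∑ σ ∈ SEP n with SumDecomposable σ, y ^ changes a (permWord σ ++ [b])

/-- Generating function of nonempty sum-indecomposable separable permutations, weighted like
`decGF`. -/
noncomputable def indecGF (a b : Bool) : PowerSeries R :=
  PowerSeries.mk fun n => if n = 0 then 0 else
    ∑ σ ∈ SEP n with ¬ SumDecomposable σ, y ^ changes a (permWord σ ++ [b])

theorem decGF_eq (a b : Bool) :
    decGF y a b = indecGF y a true * (indecGF y true b + decGF y true b) := by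
  ext n
  rw [PowerSeries.coeff_mul, decGF, PowerSeries.coeff_mk,
    sum_sumDecomposable n fun w => y ^ changes a (w ++ [b])]
  refine Finset.sum_congr rfl fun ⟨k, l⟩ _ => ?_
  simp only [indecGF, decGF, map_add, PowerSeries.coeff_mk]
  by_cases hk : k = 0
  · simp [hk]
  by_cases hl : l = 0
  · have h0 : ∀ σ : Equiv.Perm (Fin 0), ¬ SumDecomposable σ := by
      rintro σ ⟨m, h1, h2, -⟩; omega
    subst hl
    simp [h0]
  rw [if_neg (by simp [hk, hl]), if_neg hk, if_neg hl, add_comm,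
    Finset.sum_filter_add_sum_filter_not, Finset.sum_mul_sum]
  refine Finset.sum_congr rfl fun τ _ => Finset.sum_congr rfl fun ρ _ => ?_
  rw [List.append_assoc, List.cons_append, changes_append_cons, pow_add]

theorem sep_one : SEP 1 = {1} := by
  ext σ
  rw [mem_SEP, Finset.mem_singleton]
  refine ⟨fun _ => Subsingleton.elim _ _, fun _ => (separable_iff σ).2 ⟨?_, ?_⟩⟩ <;>
  · rintro ⟨a, b, c, d, h, -⟩
    exact absurd h (by simp [Subsingleton.elim a b])

theorem not_sumDecomposable_of_le_one {n : ℕ} (hn : n ≤ 1) (σ : Equiv.Perm (Fin n)) :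
    ¬ SumDecomposable σ := by
  rintro ⟨k, h1, h2, -⟩; omega

theorem indecGF_eq (a b : Bool) :
    indecGF y a b = PowerSeries.X * PowerSeries.C (y ^ (if a = b then 0 else 1)) +
      decGF y (!a) (!b) := by
  ext n
  rw [map_add, mul_comm, PowerSeries.coeff_C_mul, PowerSeries.coeff_X, indecGF, decGF,
    PowerSeries.coeff_mk, PowerSeries.coeff_mk]
  match n with
  | 0 => simp [not_sumDecomposable_of_le_one]
  | 1 =>
    simp [not_sumDecomposable_of_le_one, sep_one, permWord, ascWord, changes]
  | n + 2 =>
    rw [if_neg (show n + 2 ≠ 0 by omega), if_neg (show n + 2 ≠ 1 by omega),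
      sum_not_sumDecomposable (n := n + 2) (by omega) fun w => y ^ changes a (w ++ [b])]
    simp only [mul_zero, zero_add]
    refine Finset.sum_congr rfl fun σ _ => ?_
    rw [← changes_not_map a]
    simp [Function.comp_def]

theorem indecGF_cubic :
    (indecGF y true true - PowerSeries.X) * (1 - 2 * indecGF y true true) ^ 2 =
      PowerSeries.X ^ 2 * PowerSeries.C (y ^ 2) * (1 - indecGF y true true) := by
  have hu : IsUnit (1 - indecGF y true true) := by
    rw [PowerSeries.isUnit_iff_constantCoeff]
    have : PowerSeries.constantCoeff (indecGF y true true) = 0 := by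
      rw [← PowerSeries.coeff_zero_eq_constantCoeff_apply, indecGF, PowerSeries.coeff_mk,
        if_pos rfl]
    simp [this]
  have e1 := indecGF_eq y true true
  have e2 := indecGF_eq y false true
  have e3 := indecGF_eq y true false
  have d1 := decGF_eq y false false
  have d2 := decGF_eq y true false
  have d3 := decGF_eq y false true
  have d4 := decGF_eq y true true
  simp only [Bool.not_true, Bool.not_false, if_true, pow_zero, map_one, mul_one,
    Bool.false_eq_true, Bool.true_eq_false, if_false, pow_one] at e1 e2 e3
  rw [map_pow]
  generalize indecGF y true true = u at *
  generalize indecGF y true false = v at *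
  generalize indecGF y false true = w at *
  generalize decGF y true true = a at *
  generalize decGF y true false = b at *
  generalize decGF y false true = c at *
  generalize decGF y false false = d at *
  generalize PowerSeries.C y = z at *
  generalize (PowerSeries.X : PowerSeries R) = x at *
  have h1 : (u - x) * (1 - u) = w * v := by
    linear_combination (1 - u) * e1 + (1 - u) * d1 + w * d2
  have h2 : (w - x * z) * (1 - u) = u * v := by
    linear_combination (1 - u) * e2 + d2
  have h3 : (v - x * z) * (1 - u) = u * w := by
    linear_combination (1 - u) * e3 + (1 - u) * d3 + w * d4
  have h4 : v = w := by linear_combination h3 - h2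
  subst h4
  refine hu.mul_right_cancel ?_
  have h5 : v * (1 - 2 * u) = x * z * (1 - u) := by linear_combination h2
  linear_combination (1 - 2 * u) ^ 2 * h1 + (v * (1 - 2 * u) + x * z * (1 - u)) * h5

end

/-! ### Moments -/

open PowerSeries in
/-- The coefficient of the `j`-th power of the inner variable. -/
noncomputable def innerCoeff (j : ℕ) (f : PowerSeries (Polynomial ℝ)) : PowerSeries ℝ :=
  mk fun n => (coeff n f).coeff j

section
open PowerSeries

theorem innerCoeff_add (j : ℕ) (f g : PowerSeries (Polynomial ℝ)) :
    innerCoeff j (f + g) = innerCoeff j f + innerCoeff j g := by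
  ext n; simp [innerCoeff]

theorem innerCoeff_sub (j : ℕ) (f g : PowerSeries (Polynomial ℝ)) :
    innerCoeff j (f - g) = innerCoeff j f - innerCoeff j g := by
  ext n; simp [innerCoeff]

theorem innerCoeff_mul (j : ℕ) (f g : PowerSeries (Polynomial ℝ)) :
    innerCoeff j (f * g) = ∑ p ∈ antidiagonal j, innerCoeff p.1 f * innerCoeff p.2 g := by
  ext n
  simp only [innerCoeff, coeff_mk, coeff_mul, Polynomial.finsetSum_coeff, Polynomial.coeff_mul,
    map_sum]
  exact Finset.sum_comm

theorem innerCoeff_C (j : ℕ) (p : Polynomial ℝ) : innerCoeff j (C p) = C (p.coeff j) := by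
  ext n
  simp only [innerCoeff, coeff_mk, coeff_C]
  split_ifs <;> simp

theorem innerCoeff_X (j : ℕ) : innerCoeff j X = if j = 0 then X else 0 := by
  ext n
  simp only [innerCoeff, coeff_mk, coeff_X]
  split_ifs with h1 h2 h2 <;> simp [Polynomial.coeff_one, coeff_X, h1, h2]

theorem innerCoeff_zero_mul (f g : PowerSeries (Polynomial ℝ)) :
    innerCoeff 0 (f * g) = innerCoeff 0 f * innerCoeff 0 g := by
  simp [innerCoeff_mul]

theorem innerCoeff_one_mul (f g : PowerSeries (Polynomial ℝ)) :
    innerCoeff 1 (f * g) = innerCoeff 0 f * innerCoeff 1 g + innerCoeff 1 f * innerCoeff 0 g := by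
  simp [innerCoeff_mul, Finset.Nat.antidiagonal_succ]

theorem innerCoeff_two_mul (f g : PowerSeries (Polynomial ℝ)) :
    innerCoeff 2 (f * g) =
      innerCoeff 0 f * innerCoeff 2 g + innerCoeff 1 f * innerCoeff 1 g +
        innerCoeff 2 f * innerCoeff 0 g := by
  simp [innerCoeff_mul, Finset.Nat.antidiagonal_succ, add_assoc]

/-- Generating function of the binomial moments of order `j` of the number of changes in the
padded words of sum-indecomposable separable permutations. -/
noncomputable def momentGF (j : ℕ) : PowerSeries ℝ :=
  innerCoeff j (indecGF (1 + Polynomial.X : Polynomial ℝ) true true)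

theorem coeff_momentGF (j n : ℕ) (hn : n ≠ 0) : coeff n (momentGF j) =
    ∑ σ ∈ SEP n with ¬ SumDecomposable σ,
      ((changes true (permWord σ ++ [true])).choose j : ℝ) := by
  simp [momentGF, innerCoeff, indecGF, hn, Polynomial.finsetSum_coeff,
    Polynomial.coeff_one_add_X_pow]

theorem coeff_zero_momentGF (j : ℕ) : coeff 0 (momentGF j) = 0 := by
  simp [momentGF, innerCoeff, indecGF]

theorem momentGF_cubic :
    (momentGF 0 - X) * (1 - 2 * momentGF 0) ^ 2 = X ^ 2 * (1 - momentGF 0) ∧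
    momentGF 1 * ((1 - 2 * momentGF 0) ^ 2 - 4 * (momentGF 0 - X) * (1 - 2 * momentGF 0) + X ^ 2) =
      2 * X ^ 2 * (1 - momentGF 0) ∧
    momentGF 2 * ((1 - 2 * momentGF 0) ^ 2 - 4 * (momentGF 0 - X) * (1 - 2 * momentGF 0) + X ^ 2) =
      X ^ 2 * (1 - momentGF 0) - 2 * X ^ 2 * momentGF 1 +
        4 * momentGF 1 ^ 2 * (1 - 3 * momentGF 0 + X) := by
  have h := indecGF_cubic (1 + Polynomial.X : Polynomial ℝ)
  have e : ∀ j, momentGF j =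
    innerCoeff j (indecGF (1 + Polynomial.X : Polynomial ℝ) true true) := fun _ => rfl
  generalize indecGF (1 + Polynomial.X : Polynomial ℝ) true true = u at h e
  replace h : (u - X) * ((1 - (u + u)) * (1 - (u + u))) =
      X * X * C ((1 + Polynomial.X : Polynomial ℝ) ^ 2) * (1 - u) := by linear_combination h
  have one : ∀ j, innerCoeff j 1 = if j = 0 then 1 else 0 := by
    intro j
    have := innerCoeff_C j 1
    rw [map_one] at this
    rw [this, Polynomial.coeff_one]
    split_ifs <;> simp
  have hy : ∀ j, innerCoeff j (C ((1 + Polynomial.X : Polynomial ℝ) ^ 2)) =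
      C ((Nat.choose 2 j : ℕ) : ℝ) := by
    intro j
    rw [innerCoeff_C, Polynomial.coeff_one_add_X_pow]
  have h0 := congrArg (innerCoeff 0) h
  have h1 := congrArg (innerCoeff 1) h
  have h2 := congrArg (innerCoeff 2) h
  simp only [innerCoeff_zero_mul, innerCoeff_one_mul, innerCoeff_two_mul, innerCoeff_sub,
    innerCoeff_add, one, innerCoeff_X, hy, OfNat.ofNat_ne_zero, one_ne_zero, if_true, if_false,
    show Nat.choose 2 0 = 1 from rfl, show Nat.choose 2 1 = 2 from rfl,
    show Nat.choose 2 2 = 1 from rfl, Nat.cast_one, Nat.cast_ofNat, map_one, map_ofNat] at h0 h1 h2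
  rw [e, e, e]
  refine ⟨?_, ?_, ?_⟩
  · linear_combination h0
  · linear_combination h1
  · linear_combination h2

theorem constantCoeff_momentGF (j : ℕ) : constantCoeff (momentGF j) = 0 := by
  rw [← coeff_zero_eq_constantCoeff_apply, coeff_zero_momentGF]

theorem ne_zero_of_constantCoeff {f : PowerSeries ℝ} (h : constantCoeff f ≠ 0) : f ≠ 0 := by
  rintro rfl; simp at h

theorem momentGF_zero_sq : 2 * momentGF 0 ^ 2 = (1 + X) * momentGF 0 - X := by
  have h : 2 * momentGF 0 - 1 - X ≠ 0 :=
    ne_zero_of_constantCoeff (by simp [constantCoeff_momentGF])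
  refine mul_left_cancel₀ h ?_
  linear_combination momentGF_cubic.1

theorem derivative_momentGF_zero :
    (1 + X - 4 * momentGF 0) * derivative ℝ (momentGF 0) = 1 - momentGF 0 := by
  have h := congrArg (derivative ℝ) momentGF_zero_sq
  have h2 : derivative ℝ (2 : PowerSeries ℝ) = 0 := by
    simpa using (derivative ℝ).map_natCast 2
  simp only [Derivation.leibniz, map_sub, map_add, Derivation.leibniz_pow, smul_eq_mul,
    derivative_X, Derivation.map_one_eq_zero, h2] at h
  simp at h
  linear_combination -h

theorem derivative_derivative_momentGF_zero :
    (1 + X - 4 * momentGF 0) * derivative ℝ (derivative ℝ (momentGF 0)) =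
      4 * derivative ℝ (momentGF 0) ^ 2 - 2 * derivative ℝ (momentGF 0) := by
  have h := congrArg (derivative ℝ) derivative_momentGF_zero
  have h2 : derivative ℝ (4 : PowerSeries ℝ) = 0 := by
    simpa using (derivative ℝ).map_natCast 4
  simp only [Derivation.leibniz, map_sub, map_add, smul_eq_mul,
    derivative_X, Derivation.map_one_eq_zero, h2] at h
  simp at h
  linear_combination h

theorem momentGF_one_eq : momentGF 1 = 2 * X * momentGF 0 * derivative ℝ (momentGF 0) := by
  have hs : 1 + X - 4 * momentGF 0 ≠ 0 :=
    ne_zero_of_constantCoeff (by simp [constantCoeff_momentGF])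
  have hu : 1 - momentGF 0 ≠ 0 :=
    ne_zero_of_constantCoeff (by simp [constantCoeff_momentGF])
  have hv : 1 - 2 * momentGF 0 ≠ 0 :=
    ne_zero_of_constantCoeff (by simp [constantCoeff_momentGF])
  have hd := derivative_momentGF_zero
  have hq := momentGF_zero_sq
  have h1 := momentGF_cubic.2.1
  generalize derivative ℝ (momentGF 0) = d at *
  generalize momentGF 0 = u at *
  generalize momentGF 1 = v at *
  generalize (X : PowerSeries ℝ) = x at *
  refine mul_left_cancel₀ (mul_ne_zero hs hv) ?_
  linear_combination (1 - u) * h1 - (3 - 6 * u + x) * v * hq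
    + 2 * x * (1 - u) * hq - 2 * x * u * (1 - 2 * u) * hd

theorem momentGF_two_eq : 2 * momentGF 2 + momentGF 1 =
    X ^ 3 * momentGF 0 + X - X ^ 2 - X ^ 3 - X * derivative ℝ (momentGF 0) +
      X * (2 * (X ^ 2 * derivative ℝ (derivative ℝ (momentGF 0)))
        + 11 * (X * derivative ℝ (momentGF 0)) - 4 * momentGF 0) := by
  have hs : 1 + X - 4 * momentGF 0 ≠ 0 :=
    ne_zero_of_constantCoeff (by simp [constantCoeff_momentGF])
  have hv : 1 - 2 * momentGF 0 ≠ 0 :=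
    ne_zero_of_constantCoeff (by simp [constantCoeff_momentGF])
  have hd := derivative_momentGF_zero
  have he := derivative_derivative_momentGF_zero
  have hq := momentGF_zero_sq
  have h1 := momentGF_one_eq
  have h2 := momentGF_cubic.2.2
  generalize derivative ℝ (derivative ℝ (momentGF 0)) = e at *
  generalize derivative ℝ (momentGF 0) = d at *
  generalize momentGF 0 = u at *
  generalize momentGF 1 = v at *
  generalize momentGF 2 = w at *
  generalize (X : PowerSeries ℝ) = x at *
  generalize hsu : 1 + x - 4 * u = s at *
  have hv' : s * v = 2 * x * u * (1 - u) := by rw [h1]; linear_combination 2 * x * u * hd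
  have he' : s ^ 3 * e = 4 * (1 - u) ^ 2 - 2 * s * (1 - u) := by
    linear_combination s ^ 2 * he + (4 * (s * d + 1 - u) - 2 * s) * hd
  have hw : (1 - 2 * u) * s * w = (1 - u) * (x ^ 2 * (1 - u) - 2 * x ^ 2 * v +
      4 * v ^ 2 * (1 - 3 * u + x)) := by
    rw [← hsu]; linear_combination (1 - u) * h2 - (3 - 6 * u + x) * w * hq
  have hvv : s ^ 2 * v ^ 2 = (2 * x * u * (1 - u)) ^ 2 := by rw [← hv']; ring
  have hw' : (1 - 2 * u) * s ^ 4 * w = (1 - u) * (x ^ 2 * (1 - u) * s ^ 3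
      - 2 * x ^ 2 * s ^ 2 * (2 * x * u * (1 - u))
      + 4 * s * (2 * x * u * (1 - u)) ^ 2 * (1 - 3 * u + x)) := by
    linear_combination s ^ 3 * hw - 2 * (1 - u) * x ^ 2 * s ^ 2 * hv'
      + 4 * s * (1 - u) * (1 - 3 * u + x) * hvv
  refine mul_left_cancel₀ (mul_ne_zero hv (pow_ne_zero 4 hs)) ?_
  suffices H : 2 * ((1 - u) * (x ^ 2 * (1 - u) * s ^ 3
      - 2 * x ^ 2 * s ^ 2 * (2 * x * u * (1 - u))
      + 4 * s * (2 * x * u * (1 - u)) ^ 2 * (1 - 3 * u + x))) +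
      (1 - 2 * u) * s ^ 3 * (2 * x * u * (1 - u)) =
      (1 - 2 * u) * (s ^ 4 * (x ^ 3 * u + x - x ^ 2 - x ^ 3) - x * s ^ 3 * (1 - u) +
        x * (2 * (x ^ 2 * s * (4 * (1 - u) ^ 2 - 2 * s * (1 - u))) + 11 * (x * s ^ 3 * (1 - u))
          - 4 * s ^ 4 * u)) by
    linear_combination H + 2 * hw' + (1 - 2 * u) * s ^ 3 * hv'
      - (1 - 2 * u) * (11 * x ^ 2 - x) * s ^ 3 * hd - 2 * (1 - 2 * u) * x ^ 3 * s * he'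
  subst hsu
  clear hs hv hd he h1 h2 hv' he' hw hvv hw'
  grind

end

/-! ### Asymptotics of the coefficients -/

section
open PowerSeries

theorem coeff_X_mul_derivative (n : ℕ) (f : PowerSeries ℝ) :
    coeff n (X * derivative ℝ f) = n * coeff n f := by
  cases n with
  | zero => simp
  | succ n => rw [coeff_succ_X_mul, coeff_derivative]; push_cast; ring

theorem coeff_X_sq_mul_derivative (n : ℕ) (f : PowerSeries ℝ) :
    coeff n (X ^ 2 * derivative ℝ (derivative ℝ f)) = n * (n - 1) * coeff n f := by
  have h : X ^ 2 * derivative ℝ (derivative ℝ f) =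
      X * derivative ℝ (X * derivative ℝ f) - X * derivative ℝ f := by
    simp [Derivation.leibniz]; ring
  rw [h, map_sub, coeff_X_mul_derivative, coeff_X_mul_derivative]
  ring

theorem coeff_momentGF_zero_one : coeff 1 (momentGF 0) = 1 := by
  have h := congrArg (coeff 1) momentGF_zero_sq
  rw [show 2 * momentGF 0 ^ 2 = momentGF 0 * momentGF 0 + momentGF 0 * momentGF 0 by ring,
    add_mul, one_mul] at h
  simp [coeff_mul, Finset.Nat.antidiagonal_succ, coeff_X,
    constantCoeff_momentGF] at h
  linarith

theorem coeff_momentGF_zero_two : coeff 2 (momentGF 0) = 1 := by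
  have h := congrArg (coeff 2) momentGF_zero_sq
  rw [show 2 * momentGF 0 ^ 2 = momentGF 0 * momentGF 0 + momentGF 0 * momentGF 0 by ring,
    add_mul, one_mul] at h
  simp [coeff_mul, Finset.Nat.antidiagonal_succ, coeff_X, constantCoeff_momentGF,
    coeff_momentGF_zero_one] at h
  linarith

theorem coeff_momentGF_zero_rec (n : ℕ) :
    (n + 3) * coeff (n + 3) (momentGF 0) =
      (6 * n + 9) * coeff (n + 2) (momentGF 0) - n * coeff (n + 1) (momentGF 0) := by
  have h : X * derivative ℝ (momentGF 0) + X * (X * (X * derivative ℝ (momentGF 0)))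
      + 3 * (X * momentGF 0) + X ^ 2 = X + 6 * (X * (X * derivative ℝ (momentGF 0)))
        + X * (X * momentGF 0) := by
    linear_combination X * (1 + X - 4 * momentGF 0) * derivative_momentGF_zero +
      (2 * X - 8 * X * derivative ℝ (momentGF 0)) * momentGF_zero_sq
  have h := congrArg (coeff (n + 3)) h
  have e3 (f : PowerSeries ℝ) : coeff (n + 3) (3 * f) = 3 * coeff (n + 3) f := by
    rw [← map_ofNat C, coeff_C_mul]
  have e6 (f : PowerSeries ℝ) : coeff (n + 3) (6 * f) = 6 * coeff (n + 3) f := by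
    rw [← map_ofNat C, coeff_C_mul]
  have hd (m : ℕ) := coeff_X_mul_derivative m (momentGF 0)
  generalize X * derivative ℝ (momentGF 0) = t at h hd
  simp only [map_add, e3, e6, coeff_X_pow, coeff_X, coeff_succ_X_mul, hd] at h
  simp at h
  linear_combination h

theorem coeff_momentGF_one (n : ℕ) : coeff (n + 2) (momentGF 1) =
    (n + 2) * (coeff (n + 2) (momentGF 0) + coeff (n + 1) (momentGF 0)) / 2 := by
  have h2 : derivative ℝ (2 : PowerSeries ℝ) = 0 := by
    simpa using (derivative ℝ).map_natCast 2
  have h : momentGF 1 + momentGF 1 =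
      X * derivative ℝ (momentGF 0 + X * momentGF 0 - X) := by
    rw [show momentGF 0 + X * momentGF 0 - X = 2 * momentGF 0 ^ 2 by
      rw [momentGF_zero_sq]; ring, momentGF_one_eq]
    simp only [Derivation.leibniz, Derivation.leibniz_pow, smul_eq_mul, h2]
    simp
    ring
  have h := congrArg (coeff (n + 2)) h
  rw [coeff_X_mul_derivative] at h
  simp only [map_add, map_sub, coeff_succ_X_mul, coeff_X] at h
  simp at h
  linarith

theorem coeff_momentGF_two (n : ℕ) :
    2 * coeff (n + 4) (momentGF 2) + coeff (n + 4) (momentGF 1) =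
      coeff (n + 1) (momentGF 0) - (n + 4) * coeff (n + 4) (momentGF 0) +
        (2 * (n + 4) ^ 2 + 5 * (n + 4) - 11) * coeff (n + 3) (momentGF 0) := by
  have e (k : ℕ) [k.AtLeastTwo] (m : ℕ) (f : PowerSeries ℝ) :
      coeff m ((OfNat.ofNat k : PowerSeries ℝ) * f) = (OfNat.ofNat k : ℝ) * coeff m f := by
    rw [← map_ofNat C, coeff_C_mul]
  have h := congrArg (coeff (n + 4)) momentGF_two_eq
  simp only [map_add, map_sub, e, coeff_X_mul_derivative, coeff_X_pow, coeff_X] at h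
  rw [coeff_succ_X_mul, show n + 4 = (n + 1) + 3 from rfl, coeff_X_pow_mul] at h
  simp only [map_add, map_sub, e, coeff_X_mul_derivative, coeff_X_sq_mul_derivative] at h
  simp at h
  rw [h]
  ring

end

theorem tendsto_zero_of_le_mul_add {d c : ℕ → ℝ} {q : ℝ} (hd : ∀ n, 0 ≤ d n) (hq0 : 0 ≤ q)
    (hq1 : q < 1) (h : ∀ n, d (n + 1) ≤ q * d n + c n) (hc : Tendsto c atTop (nhds 0)) :
    Tendsto d atTop (nhds 0) := by
  rw [Metric.tendsto_atTop]
  intro ε hε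
  obtain ⟨N, hN⟩ := eventually_atTop.1
    (hc.eventually (gt_mem_nhds (show 0 < ε / 2 * (1 - q) by nlinarith)))
  have hk : ∀ k, d (N + k) ≤ q ^ k * d N + ε / 2 := by
    intro k
    induction k with
    | zero => simp; linarith
    | succ k ih =>
      calc d (N + k + 1) ≤ q * d (N + k) + c (N + k) := h _
        _ ≤ q * (q ^ k * d N + ε / 2) + ε / 2 * (1 - q) := by
          have := hN (N + k) (by omega)
          gcongr
        _ = _ := by ring
  have hlim : Tendsto (fun k => q ^ k * d N) atTop (nhds 0) := by
    simpa using (tendsto_pow_atTop_nhds_zero_of_lt_one hq0 hq1).mul_const (d N)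
  obtain ⟨K, hK⟩ := eventually_atTop.1 (hlim.eventually (gt_mem_nhds (half_pos hε)))
  refine ⟨N + K, fun n hn => ?_⟩
  obtain ⟨k, rfl⟩ := Nat.exists_eq_add_of_le (show N ≤ n by omega)
  have h1 := hk k
  have h2 := hK k (by omega)
  rw [Real.dist_eq, sub_zero, abs_of_nonneg (hd _)]
  linarith

section
variable {a : ℕ → ℝ}

theorem pos_and_le_of_rec (h1 : a 1 = 1) (h2 : a 2 = 1)
    (hr : ∀ n : ℕ, (n + 3) * a (n + 3) = (6 * n + 9) * a (n + 2) - n * a (n + 1)) (n : ℕ) :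
    0 < a (n + 1) ∧ a (n + 1) ≤ a (n + 2) := by
  induction n with
  | zero => simp [h1, h2]
  | succ n ih =>
    obtain ⟨h, h'⟩ := ih
    have := hr n
    have hn : (0 : ℝ) ≤ n := n.cast_nonneg
    refine ⟨by linarith, ?_⟩
    change a (n + 2) ≤ a (n + 3)
    by_contra hlt
    push Not at hlt
    nlinarith

theorem ratio_rec (h1 : a 1 = 1) (h2 : a 2 = 1)
    (hr : ∀ n : ℕ, (n + 3) * a (n + 3) = (6 * n + 9) * a (n + 2) - n * a (n + 1))
    {x : ℝ} (hx : x ^ 2 = 6 * x - 1) (n : ℕ) :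
    (n + 3) * (a (n + 2) / a (n + 3) - x) =
      a (n + 2) / a (n + 3) * x * (n * (a (n + 1) / a (n + 2) - x) + (9 - 3 * x)) := by
  have p2 := (pos_and_le_of_rec h1 h2 hr (n + 1)).1
  have p3 := (pos_and_le_of_rec h1 h2 hr (n + 2)).1
  change 0 < a (n + 2) at p2
  change 0 < a (n + 3) at p3
  field_simp
  linear_combination (-x) * hr n + (n + 3) * a (n + 2) * hx

theorem tendsto_ratio (h1 : a 1 = 1) (h2 : a 2 = 1)
    (hr : ∀ n : ℕ, (n + 3) * a (n + 3) = (6 * n + 9) * a (n + 2) - n * a (n + 1))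
    {x : ℝ} (hx : x ^ 2 = 6 * x - 1) (hx0 : 0 < x) (hx1 : x < 1) :
    Tendsto (fun n => a (n + 1) / a (n + 2)) atTop (nhds x) := by
  rw [← tendsto_sub_nhds_zero_iff, tendsto_zero_iff_abs_tendsto_zero]
  refine tendsto_zero_of_le_mul_add (q := x) (c := fun n : ℕ => 9 / ((n : ℝ) + 1))
    (fun n => abs_nonneg _) hx0.le hx1 (fun n => ?_) ?_
  · have h := ratio_rec h1 h2 hr hx n
    obtain ⟨p2, h23⟩ := pos_and_le_of_rec h1 h2 hr (n + 1)
    have p3 : 0 < a (n + 3) := p2.trans_le h23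
    have hle : a (n + 2) / a (n + 3) ≤ 1 := (div_le_one p3).2 h23
    have hpos : 0 < a (n + 2) / a (n + 3) := div_pos p2 p3
    simp only [Function.comp]
    change |a (n + 2) / a (n + 3) - x| ≤ x * |a (n + 1) / a (n + 2) - x| + _
    generalize a (n + 2) / a (n + 3) = s at *
    generalize a (n + 1) / a (n + 2) = r at *
    have hn : (0 : ℝ) ≤ n := n.cast_nonneg
    have key : ((n : ℝ) + 3) * |s - x| ≤ x * (n * |r - x|) + 9 := by
      rw [← abs_of_nonneg (show (0 : ℝ) ≤ n + 3 by positivity), ← abs_mul, h, abs_mul,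
        abs_of_pos (mul_pos hpos hx0)]
      have h9 : |n * (r - x) + (9 - 3 * x)| ≤ n * |r - x| + 9 := by
        refine (abs_add_le _ _).trans ?_
        rw [abs_mul, abs_of_nonneg hn, abs_of_pos (show 0 < 9 - 3 * x by linarith)]
        linarith
      have hb : 0 ≤ n * |r - x| + 9 := by positivity
      calc s * x * _ ≤ 1 * x * (n * |r - x| + 9) := by gcongr
        _ ≤ _ := by nlinarith
    have hd : (9 : ℝ) / (n + 1) * (n + 1) = 9 := by field_simp
    have h0 : 0 ≤ (9 : ℝ) / (n + 1) := by positivity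
    have h1 : 0 ≤ x * |r - x| := by positivity
    by_contra hlt
    push Not at hlt
    nlinarith
  · exact tendsto_const_nhds.div_atTop (tendsto_natCast_atTop_atTop.atTop_add tendsto_const_nhds)

theorem tendsto_mul_ratio_sub (h1 : a 1 = 1) (h2 : a 2 = 1)
    (hr : ∀ n : ℕ, (n + 3) * a (n + 3) = (6 * n + 9) * a (n + 2) - n * a (n + 1))
    {x : ℝ} (hx : x ^ 2 = 6 * x - 1) (hx0 : 0 < x) (hx1 : x < 1) :
    Tendsto (fun n : ℕ => n * (a (n + 1) / a (n + 2) - x)) atTop (nhds (3 * x / 2)) := by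
  have hlim := tendsto_ratio h1 h2 hr hx hx0 hx1
  have hlim' := (tendsto_add_atTop_iff_nat 1).2 hlim
  rw [← tendsto_sub_nhds_zero_iff, tendsto_zero_iff_abs_tendsto_zero]
  refine tendsto_zero_of_le_mul_add (q := x)
    (c := fun n : ℕ => |a (n + 2) / a (n + 3) * x * (9 - 3 * x + 3 * x / 2)
      - 2 * (a (n + 2) / a (n + 3) - x) - 3 * x / 2|)
    (fun n => abs_nonneg _) hx0.le hx1 (fun n => ?_) ?_
  · have h := ratio_rec h1 h2 hr hx n
    obtain ⟨p2, h23⟩ := pos_and_le_of_rec h1 h2 hr (n + 1)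
    have p3 : 0 < a (n + 3) := p2.trans_le h23
    have hle : a (n + 2) / a (n + 3) ≤ 1 := (div_le_one p3).2 h23
    have hpos : 0 < a (n + 2) / a (n + 3) := div_pos p2 p3
    simp only [Function.comp]
    change |((n + 1 : ℕ) : ℝ) * (a (n + 2) / a (n + 3) - x) - 3 * x / 2| ≤
      x * |n * (a (n + 1) / a (n + 2) - x) - 3 * x / 2| + _
    generalize a (n + 2) / a (n + 3) = s at *
    generalize a (n + 1) / a (n + 2) = r at *
    have e : ((n + 1 : ℕ) : ℝ) * (s - x) - 3 * x / 2 = s * x * (n * (r - x) - 3 * x / 2) +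
        (s * x * (9 - 3 * x + 3 * x / 2) - 2 * (s - x) - 3 * x / 2) := by
      push_cast; linear_combination h
    rw [e]
    refine (abs_add_le _ _).trans ?_
    rw [abs_mul, abs_of_pos (mul_pos hpos hx0)]
    gcongr
    nlinarith
  · refine (tendsto_zero_iff_abs_tendsto_zero _).1 ?_
    have := (((hlim'.mul_const x).mul_const (9 - 3 * x + 3 * x / 2)).sub
      ((hlim'.sub_const x).const_mul 2)).sub_const (3 * x / 2)
    convert this using 2
    linear_combination (3 * x / 2) * hx

theorem tendsto_variance_of_rec (h1 : a 1 = 1) (h2 : a 2 = 1)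
    (hr : ∀ n : ℕ, (n + 3) * a (n + 3) = (6 * n + 9) * a (n + 2) - n * a (n + 1)) :
    Tendsto (fun n : ℕ => ((a (n + 1) - (n + 4) * a (n + 4) +
        (2 * (n + 4) ^ 2 + 5 * (n + 4) - 11) * a (n + 3)) / a (n + 4) -
        ((n + 4) * (a (n + 4) + a (n + 3)) / 2 / a (n + 4)) ^ 2) / (n + 4)) atTop
      (nhds ((16 - 11 * √2) / 2)) := by
  have hs : √2 ^ 2 = 2 := Real.sq_sqrt (by norm_num)
  have hs0 : 0 ≤ √2 := Real.sqrt_nonneg 2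
  obtain ⟨x, hxs⟩ : ∃ x, x = 3 - 2 * √2 := ⟨_, rfl⟩
  have hx : x ^ 2 = 6 * x - 1 := by rw [hxs]; linear_combination 4 * hs
  have hx0 : 0 < x := by nlinarith
  have hx1 : x < 1 := by nlinarith
  have hlim := tendsto_ratio h1 h2 hr hx hx0 hx1
  have hlim' := (tendsto_add_atTop_iff_nat 2).2 hlim
  have hmul := (tendsto_add_atTop_iff_nat 2).2 (tendsto_mul_ratio_sub h1 h2 hr hx hx0 hx1)
  have hinv : Tendsto (fun n : ℕ => ((n : ℝ) + 4)⁻¹) atTop (nhds 0) :=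
    (tendsto_natCast_atTop_atTop.atTop_add tendsto_const_nhds).inv_tendsto_atTop
  have h3 : Tendsto (fun n => a (n + 1) / a (n + 4)) atTop (nhds (x * x * x)) := by
    refine ((hlim.mul ((tendsto_add_atTop_iff_nat 1).2 hlim)).mul hlim').congr fun n => ?_
    have p2 := (pos_and_le_of_rec h1 h2 hr (n + 1)).1
    have p3 := (pos_and_le_of_rec h1 h2 hr (n + 2)).1
    have p4 := (pos_and_le_of_rec h1 h2 hr (n + 3)).1
    change 0 < a (n + 2) at p2
    change 0 < a (n + 3) at p3
    change 0 < a (n + 4) at p4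
    change a (n + 1) / a (n + 2) * (a (n + 2) / a (n + 3)) * (a (n + 3) / a (n + 4)) = _
    field_simp
  have := (((hlim'.const_mul 5).sub_const 1).add ((h3.sub (hlim'.const_mul 11)).mul hinv)).sub
    (((hmul.add ((hlim'.sub_const x).const_mul 2)).mul (hlim'.sub_const (6 - x))).div_const 4)
  convert this using 2 with n
  · have p4 := (pos_and_le_of_rec h1 h2 hr (n + 3)).1
    change 0 < a (n + 4) at p4
    change _ = 5 * (a (n + 3) / a (n + 4)) - 1 + (a (n + 1) / a (n + 4) -
      11 * (a (n + 3) / a (n + 4))) * ((n : ℝ) + 4)⁻¹ -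
      (((n + 2 : ℕ) : ℝ) * (a (n + 3) / a (n + 4) - x) + 2 * (a (n + 3) / a (n + 4) - x)) *
        (a (n + 3) / a (n + 4) - (6 - x)) / 4
    have hn : (n : ℝ) + 4 ≠ 0 := by positivity
    push_cast
    field_simp
    linear_combination (-4 * a (n + 4) ^ 2 * (n + 4) ^ 2) * hx
  · rw [hxs]
    linear_combination 3 * hs
end

/-! ### Transfer of the variance -/

theorem sepExp_mono {n : ℕ} {f g : Equiv.Perm (Fin n) → ℝ} (h : ∀ σ ∈ SEP n, f σ ≤ g σ) :
    sepExp n f ≤ sepExp n g :=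
  div_le_div_of_nonneg_right (Finset.sum_le_sum h) (Nat.cast_nonneg _)

theorem sepExp_add (n : ℕ) (f g : Equiv.Perm (Fin n) → ℝ) :
    sepExp n (fun σ => f σ + g σ) = sepExp n f + sepExp n g := by
  simp only [sepExp, Finset.sum_add_distrib, add_div]

theorem sepExp_mul_left (n : ℕ) (c : ℝ) (f : Equiv.Perm (Fin n) → ℝ) :
    sepExp n (fun σ => c * f σ) = c * sepExp n f := by
  simp only [sepExp, ← Finset.mul_sum, mul_div_assoc]

theorem sepExp_const_le (n : ℕ) {c : ℝ} (hc : 0 ≤ c) : sepExp n (fun _ => c) ≤ c := by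
  rw [sepExp, Finset.sum_const, nsmul_eq_mul]
  exact div_le_of_le_mul₀ (Nat.cast_nonneg _) hc (mul_comm _ _).le

theorem sepExp_le_add {n : ℕ} {f g : Equiv.Perm (Fin n) → ℝ} {c : ℝ} (hc : 0 ≤ c)
    (h : ∀ σ ∈ SEP n, f σ ≤ g σ + c) : sepExp n f ≤ sepExp n g + c := by
  refine (sepExp_mono h).trans ?_
  rw [sepExp_add n g fun _ => c]
  gcongr
  exact sepExp_const_le n hc

theorem sepVar_le {n : ℕ} {f g : Equiv.Perm (Fin n) → ℝ} {c δ : ℝ} (hδ : 0 < δ) (hc : 0 ≤ c)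
    (h : ∀ σ ∈ SEP n, |f σ - g σ| ≤ c) :
    sepVar n f ≤ (1 + δ) * sepVar n g + (1 + δ⁻¹) * (2 * c) ^ 2 := by
  have h1 : sepExp n f ≤ sepExp n g + c :=
    sepExp_le_add hc fun σ hσ => by linarith [(abs_le.1 (h σ hσ)).2]
  have h2 : sepExp n g ≤ sepExp n f + c :=
    sepExp_le_add hc fun σ hσ => by linarith [(abs_le.1 (h σ hσ)).1]
  rw [sepVar, sepVar, ← sepExp_mul_left]
  have hpos : 0 < δ⁻¹ := inv_pos.2 hδ
  refine sepExp_le_add (by positivity) fun σ hσ => ?_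
  obtain ⟨h3, h4⟩ := abs_le.1 (h σ hσ)
  generalize sepExp n f = F at *
  generalize sepExp n g = G at *
  have hz : (f σ - g σ - (F - G)) ^ 2 ≤ (2 * c) ^ 2 :=
    sq_le_sq' (by linarith) (by linarith)
  calc (f σ - F) ^ 2 = ((g σ - G) + (f σ - g σ - (F - G))) ^ 2 := by ring
    _ = (1 + δ) * (g σ - G) ^ 2 + (1 + δ⁻¹) * (f σ - g σ - (F - G)) ^ 2 -
        δ⁻¹ * (δ * (g σ - G) - (f σ - g σ - (F - G))) ^ 2 := by field_simp; ring
    _ ≤ (1 + δ) * (g σ - G) ^ 2 + (1 + δ⁻¹) * (f σ - g σ - (F - G)) ^ 2 :=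
        sub_le_self _ (by positivity)
    _ ≤ _ := by gcongr

/-- A bounded perturbation of a statistic does not change the linear growth of its variance. -/
theorem tendsto_sepVar_div_of_abs_sub_le {f g : ∀ n, Equiv.Perm (Fin n) → ℝ} {c L : ℝ}
    (hc : 0 ≤ c) (h : ∀ n, 1 ≤ n → ∀ σ ∈ SEP n, |f n σ - g n σ| ≤ c)
    (hg : Tendsto (fun n : ℕ => sepVar n (g n) / n) atTop (nhds L)) :
    Tendsto (fun n : ℕ => sepVar n (f n) / n) atTop (nhds L) := by
  have hδ : Tendsto (fun n : ℕ => (√(n : ℝ))⁻¹) atTop (nhds 0) :=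
    (Real.tendsto_sqrt_atTop.comp tendsto_natCast_atTop_atTop).inv_tendsto_atTop
  have herr : Tendsto (fun n : ℕ => ((√(n : ℝ))⁻¹ ^ 2 + (√(n : ℝ))⁻¹) * (2 * c) ^ 2) atTop
      (nhds 0) := by
    simpa using ((hδ.pow 2).add hδ).mul_const ((2 * c) ^ 2)
  have bound {n : ℕ} (hn : 1 ≤ n) {p q : Equiv.Perm (Fin n) → ℝ}
      (hpq : ∀ σ ∈ SEP n, |p σ - q σ| ≤ c) :
      sepVar n p / n ≤ (1 + (√(n : ℝ))⁻¹) * (sepVar n q / n) +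
        ((√(n : ℝ))⁻¹ ^ 2 + (√(n : ℝ))⁻¹) * (2 * c) ^ 2 := by
    have hn0 : (0 : ℝ) < n := by exact_mod_cast hn
    have hs : 0 < √(n : ℝ) := Real.sqrt_pos.2 hn0
    have hsq : √(n : ℝ) ^ 2 = n := Real.sq_sqrt hn0.le
    have hb := sepVar_le (inv_pos.2 hs) hc hpq
    rw [div_le_iff₀ hn0]
    refine hb.trans (le_of_eq ?_)
    generalize √(n : ℝ) = t at hs hsq
    rw [← hsq]
    field_simp
  refine tendsto_of_tendsto_of_tendsto_of_le_of_le'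
    (g := fun n : ℕ => (sepVar n (g n) / n -
      ((√(n : ℝ))⁻¹ ^ 2 + (√(n : ℝ))⁻¹) * (2 * c) ^ 2) / (1 + (√(n : ℝ))⁻¹))
    (h := fun n : ℕ => (1 + (√(n : ℝ))⁻¹) * (sepVar n (g n) / n) +
        ((√(n : ℝ))⁻¹ ^ 2 + (√(n : ℝ))⁻¹) * (2 * c) ^ 2) ?_ ?_ ?_ ?_
  · simpa [Pi.div_def] using (hg.sub herr).div (hδ.const_add 1) (by norm_num)
  · simpa using ((hδ.const_add 1).mul hg).add herr
  · filter_upwards [eventually_ge_atTop 1] with n hn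
    rw [div_le_iff₀ (by positivity), sub_le_iff_le_add, mul_comm]
    exact bound hn fun σ hσ => by rw [abs_sub_comm]; exact h n hn σ hσ
  · filter_upwards [eventually_ge_atTop 1] with n hn
    exact bound hn (h n hn)

theorem sepVar_eq {n : ℕ} (hn : (SEP n).card ≠ 0) (f : Equiv.Perm (Fin n) → ℝ) :
    sepVar n f = sepExp n (fun σ => f σ ^ 2) - sepExp n f ^ 2 := by
  have hn' : ((SEP n).card : ℝ) ≠ 0 := Nat.cast_ne_zero.2 hn
  have h (σ) : (f σ - sepExp n f) ^ 2 =
    f σ ^ 2 + (-2 * sepExp n f * f σ + sepExp n f ^ 2) := by ring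
  have hc : sepExp n (fun _ => sepExp n f ^ 2) = sepExp n f ^ 2 := by
    rw [sepExp.eq_1 n fun _ => sepExp n f ^ 2, Finset.sum_const, nsmul_eq_mul,
      mul_div_cancel_left₀ _ hn']
  simp only [sepVar, h]
  rw [sepExp_add, sepExp_add, sepExp_mul_left, hc]
  ring

/-! ### The padded number of changes -/

/-- The number of changes in the ascent-descent word of `σ`, padded on both sides by an ascent
if `σ` is sum-indecomposable and by a descent otherwise. -/
noncomputable def paddedChanges {n : ℕ} (σ : Equiv.Perm (Fin n)) : ℕ :=
  if SumDecomposable σ then changes false (permWord σ ++ [false])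
  else changes true (permWord σ ++ [true])

theorem abs_altTypeLen_sub_paddedChanges_le {n : ℕ} (hn : 1 ≤ n) (σ : Equiv.Perm (Fin n))
    (s : Bool) : |(altTypeLen σ s s : ℝ) - paddedChanges σ| ≤ 2 := by
  obtain ⟨h1, h2⟩ := altTypeLen_bounds hn σ s
  have key : ∀ a : Bool, |(altTypeLen σ s s : ℝ) - changes a (permWord σ ++ [a])| ≤ 2 := by
    intro a
    obtain ⟨h3, h4⟩ := changes_le_append a a (permWord σ)
    have h5 := changes_le_changes_add_one a (!s) (permWord σ)
    have h6 := changes_le_changes_add_one (!s) a (permWord σ)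
    rw [abs_le]
    constructor <;> rw [← sub_nonneg]
    · have : changes a (permWord σ ++ [a]) ≤ altTypeLen σ s s + 2 := by omega
      have : (changes a (permWord σ ++ [a]) : ℝ) ≤ altTypeLen σ s s + 2 := by exact_mod_cast this
      linarith
    · have : altTypeLen σ s s ≤ changes a (permWord σ ++ [a]) + 2 := by omega
      have : (altTypeLen σ s s : ℝ) ≤ changes a (permWord σ ++ [a]) + 2 := by exact_mod_cast this
      linarith
  unfold paddedChanges
  split_ifs <;> exact key _

theorem sum_paddedChanges {n : ℕ} (hn : 2 ≤ n) (G : ℕ → ℝ) :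
    ∑ σ ∈ SEP n, G (paddedChanges σ) =
      2 * ∑ σ ∈ SEP n with ¬ SumDecomposable σ, G (changes true (permWord σ ++ [true])) := by
  rw [← Finset.sum_filter_add_sum_filter_not (SEP n) SumDecomposable, two_mul]
  congr 1
  · rw [sum_not_sumDecomposable hn fun w => G (changes true (w ++ [true]))]
    refine Finset.sum_congr rfl fun σ hσ => ?_
    rw [paddedChanges, if_pos (Finset.mem_filter.1 hσ).2,
      ← changes_not_map false (permWord σ ++ [false])]
    simp
  · refine Finset.sum_congr rfl fun σ hσ => ?_
    rw [paddedChanges, if_neg (Finset.mem_filter.1 hσ).2]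

section
open PowerSeries

theorem sum_choose_paddedChanges {n : ℕ} (hn : 2 ≤ n) (j : ℕ) :
    ∑ σ ∈ SEP n, ((paddedChanges σ).choose j : ℝ) = 2 * coeff n (momentGF j) := by
  rw [coeff_momentGF j n (by omega), sum_paddedChanges hn fun k => (k.choose j : ℝ)]

theorem card_SEP {n : ℕ} (hn : 2 ≤ n) : ((SEP n).card : ℝ) = 2 * coeff n (momentGF 0) := by
  rw [← sum_choose_paddedChanges hn 0]
  simp

theorem sepVar_paddedChanges {n : ℕ} (hn : 2 ≤ n) (h : coeff n (momentGF 0) ≠ 0) :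
    sepVar n (fun σ => (paddedChanges σ : ℝ)) =
      (2 * coeff n (momentGF 2) + coeff n (momentGF 1)) / coeff n (momentGF 0) -
        (coeff n (momentGF 1) / coeff n (momentGF 0)) ^ 2 := by
  have hcard := card_SEP hn
  have hne : (SEP n).card ≠ 0 := by
    intro h0
    rw [h0] at hcard
    simp at hcard
    exact h hcard
  have e1 := sum_choose_paddedChanges hn 1
  have e2 := sum_choose_paddedChanges hn 2
  simp only [Nat.choose_one_right] at e1
  have hsq (k : ℕ) : (k : ℝ) ^ 2 = 2 * (k.choose 2 : ℝ) + k := by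
    rw [Nat.cast_choose_two]; ring
  have e3 : ∑ σ ∈ SEP n, (paddedChanges σ : ℝ) ^ 2 =
      2 * (2 * coeff n (momentGF 2) + coeff n (momentGF 1)) := by
    simp only [hsq, Finset.sum_add_distrib, ← Finset.mul_sum, e1, e2]
    ring
  rw [sepVar_eq hne, sepExp, sepExp, e1, e3, hcard, mul_div_mul_left _ _ two_ne_zero,
    mul_div_mul_left _ _ two_ne_zero]

theorem tendsto_sepVar_paddedChanges :
    Tendsto (fun n : ℕ => sepVar n (fun σ => (paddedChanges σ : ℝ)) / n) atTop
      (nhds ((16 - 11 * √2) / 2)) := by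
  rw [← tendsto_add_atTop_iff_nat 4]
  refine (tendsto_variance_of_rec (a := fun n => coeff n (momentGF 0)) coeff_momentGF_zero_one
    coeff_momentGF_zero_two coeff_momentGF_zero_rec).congr fun n => ?_
  have hpos : 0 < coeff (n + 4) (momentGF 0) :=
    (pos_and_le_of_rec (a := fun n => coeff n (momentGF 0)) coeff_momentGF_zero_one
      coeff_momentGF_zero_two coeff_momentGF_zero_rec (n + 3)).1
  have h1 := coeff_momentGF_one (n + 2)
  rw [sepVar_paddedChanges (by omega) hpos.ne', coeff_momentGF_two, h1]
  push_cast
  ring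

end

/-- The variances of `Aₙ^{+,+}` and `Aₙ^{-,-}` are asymptotic to `((16 - 11√2)/2) n`. -/
theorem var_altTypeLen_pp_asymp :
    Tendsto (fun n : ℕ =>
        sepVar n (fun σ => (altTypeLen σ true true : ℝ)) / n) atTop
      (nhds ((16 - 11 * Real.sqrt 2) / 2)) ∧
    Tendsto (fun n : ℕ =>
        sepVar n (fun σ => (altTypeLen σ false false : ℝ)) / n) atTop
      (nhds ((16 - 11 * Real.sqrt 2) / 2)) := by
  have h (s : Bool) := tendsto_sepVar_div_of_abs_sub_le
    (f := fun _ σ => (altTypeLen σ s s : ℝ)) zero_le_two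
    (fun _ hn σ _ => abs_altTypeLen_sub_paddedChanges_le hn σ s) tendsto_sepVar_paddedChanges
  exact ⟨h true, h false⟩
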